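/- Let G be an undirected unweighted graph and H a subgraph. Suppose: H contains the first and last portions of a shortest s⇝t path so that dist_H(s,u₁) = dist_G(s,u₁) and dist_H(u₂,t) = dist_G(u₂,t) for nodes u₁, u₂ on the shortest s⇝t path; H contains edges (r₁,u₁) and (r₂,u₂); and dist_H(r₁,r₂) ≤ dist_G(r₁,r₂) + 2. Then dist_H(s,t) ≤ dist_G(s,t) + 6. -/

import Mathlib

/-- Distances between successive vertices of a walk add up to at most its length. -/
theorem SimpleGraph.Walk.edist_add_edist_add_edist_le_length {V : Type*} [DecidableEq V]
    {G : SimpleGraph V} {s t u v : V} (p : G.Walk s t) (hu : u ∈ p.support)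
    (hv : v ∈ (p.dropUntil u hu).support) :
    G.edist s u + G.edist u v + G.edist v t ≤ p.length := by
  have hp := congrArg SimpleGraph.Walk.length (p.take_spec hu)
  have hq := congrArg SimpleGraph.Walk.length ((p.dropUntil u hu).take_spec hv)
  rw [SimpleGraph.Walk.length_append] at hp hq
  rw [← hp, ← hq, ← add_assoc]
  push_cast
  gcongr <;> exact SimpleGraph.Walk.edist_le _

/-- Moving each endpoint along an edge increases the distance by at most two. -/
theorem SimpleGraph.edist_le_edist_add_two {V : Type*} {G : SimpleGraph V} {u v x y : V}
    (hx : G.Adj x u) (hy : G.Adj y v) : G.edist x y ≤ G.edist u v + 2 := by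
  calc
    G.edist x y ≤ G.edist x u + G.edist u v + G.edist v y :=
      SimpleGraph.edist_triangle.trans (add_le_add_left SimpleGraph.edist_triangle _)
    _ = G.edist u v + 2 := by
      rw [SimpleGraph.edist_eq_one_iff_adj.mpr hx, SimpleGraph.edist_eq_one_iff_adj.mpr hy.symm]
      ring

/-- The +6 stretch chaining argument: `u₁, u₂` lie (in order) on a shortest `s⇝t` path of
`G`; the subgraph `H ≤ G` realizes the `G`-distances `s⇝u₁` and `u₂⇝t`, contains the edges
`(r₁,u₁)` and `(r₂,u₂)`, and satisfies `dist_H(r₁,r₂) ≤ dist_G(r₁,r₂) + 2`.  Then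
`dist_H(s,t) ≤ dist_G(s,t) + 6`.  Distances are `ℕ∞`-valued. -/
theorem stmt10 {V : Type} [DecidableEq V] (G H : SimpleGraph V) (hle : H ≤ G)
    (s t u₁ u₂ r₁ r₂ : V)
    (p : G.Walk s t) (hshort : (p.length : ℕ∞) = G.edist s t)
    (h1 : u₁ ∈ p.support) (h2 : u₂ ∈ (p.dropUntil u₁ h1).support)
    (hpre : H.edist s u₁ = G.edist s u₁) (hsuf : H.edist u₂ t = G.edist u₂ t)
    (hr1 : H.Adj r₁ u₁) (hr2 : H.Adj r₂ u₂)
    (hmid : H.edist r₁ r₂ ≤ G.edist r₁ r₂ + 2) :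
    H.edist s t ≤ G.edist s t + 6 := by
  calc
    H.edist s t ≤ H.edist s u₁ + H.edist u₁ u₂ + H.edist u₂ t :=
      SimpleGraph.edist_triangle.trans (add_le_add_left SimpleGraph.edist_triangle _)
    _ ≤ G.edist s u₁ + (G.edist u₁ u₂ + 2 + 2 + 2) + G.edist u₂ t := by
      rw [hpre, hsuf]
      gcongr
      calc
        H.edist u₁ u₂ ≤ H.edist r₁ r₂ + 2 :=
          SimpleGraph.edist_le_edist_add_two hr1.symm hr2.symm
        _ ≤ G.edist r₁ r₂ + 2 + 2 := by gcongr
        _ ≤ G.edist u₁ u₂ + 2 + 2 + 2 := by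
          gcongr
          exact SimpleGraph.edist_le_edist_add_two (hle hr1) (hle hr2)
    _ = G.edist s u₁ + G.edist u₁ u₂ + G.edist u₂ t + 6 := by ring
    _ ≤ G.edist s t + 6 := by
      rw [← hshort]
      gcongr
      exact p.edist_add_edist_add_edist_le_length h1 h2
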